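/- Let b > 0 and c, d be integers with gcd(b,c)=1 and 0 ≤ c < d ≤ b-1. Then Λ_{b,c} and Λ_{b,d} are isomorphic (there exists A ∈ GL(2,ℤ) with ᵀA·[[0,b],[b,2c]]·A = [[0,b],[b,2d]]) if and only if cd ≡ 1 (mod b). -/

import Mathlib

open Matrix

/-!
Over a domain in which `2 ≠ 0`, the isotropic vectors of the form `[[0, b], [b, 2c]]` are the
`(x, z)` with `z * (b * x + c * z) = 0`. When `b` and `c` are coprime they fill two lines, spanned
by `(1, 0)` and by `(-c, b)`. The first column of an isometry is isotropic, hence lies on one of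
these lines. In the first case the norm of the second column gives `d ≡ u² c (mod b)` for a unit
`u`; in the second it gives `c d ≡ u² (mod b)`. Over `ℤ` we have `u² = 1`, and `0 ≤ c < d < b`
rules out `d ≡ c (mod b)`.
-/

section CommRing

variable {R : Type*} [CommRing R]

/-- Congruence of Gram matrices over `R`: isomorphism of the free bilinear lattices they define. -/
def IsCongruent {n : Type*} [Fintype n] [DecidableEq n] (G H : Matrix n n R) : Prop :=
  ∃ A : Matrix n n R, IsUnit A.det ∧ Aᵀ * G * A = H

/-- The Gram matrix of the lattice `Λ_{b,c}`, over an arbitrary commutative ring. -/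
def latticeGram (b c : R) : Matrix (Fin 2) (Fin 2) R :=
  !![0, b; b, 2 * c]

variable {b c d x y z w : R}

lemma transpose_mul_latticeGram_mul (b c x y z w : R) :
    !![x, y; z, w]ᵀ * latticeGram b c * !![x, y; z, w] =
      !![2 * (z * (b * x + c * z)), b * (x * w + y * z) + 2 * (c * z * w);
         b * (x * w + y * z) + 2 * (c * z * w), 2 * (w * (b * y + c * w))] := by
  ext i j
  fin_cases i <;> fin_cases j <;>
    simp [latticeGram, Matrix.mul_apply, Fin.sum_univ_two] <;> ring

lemma isCongruent_latticeGram_of_entries (hdet : IsUnit (x * w - y * z))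
    (hfst : z * (b * x + c * z) = 0) (hcross : b * (x * w + y * z) + 2 * (c * z * w) = b)
    (hsnd : w * (b * y + c * w) = d) :
    IsCongruent (latticeGram b c) (latticeGram b d) := by
  refine ⟨!![x, y; z, w], by rwa [det_fin_two_of], ?_⟩
  rw [transpose_mul_latticeGram_mul, hfst, hcross, hsnd, mul_zero, latticeGram]

lemma exists_entries_of_isCongruent_latticeGram [NoZeroDivisors R] [NeZero (2 : R)]
    (h : IsCongruent (latticeGram b c) (latticeGram b d)) :
    ∃ x y z w : R, IsUnit (x * w - y * z) ∧ z * (b * x + c * z) = 0 ∧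
      w * (b * y + c * w) = d := by
  obtain ⟨A, hdet, hA⟩ := h
  rw [det_fin_two] at hdet
  rw [eta_fin_two A, transpose_mul_latticeGram_mul] at hA
  have hfst : 2 * (A 1 0 * (b * A 0 0 + c * A 1 0)) = 0 := congr_fun₂ hA 0 0
  have hsnd : 2 * (A 1 1 * (b * A 0 1 + c * A 1 1)) = 2 * d := congr_fun₂ hA 1 1
  exact ⟨_, _, _, _, hdet, (mul_eq_zero_iff_left two_ne_zero).mp hfst,
    mul_left_cancel₀ two_ne_zero hsnd⟩

lemma isCongruent_latticeGram_of_dvd_sub_sq_mul (u : Rˣ) (h : b ∣ d - u ^ 2 * c) :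
    IsCongruent (latticeGram b c) (latticeGram b d) := by
  obtain ⟨t, ht⟩ := h
  have hu : (↑u⁻¹ : R) * u = 1 := u.inv_mul
  apply isCongruent_latticeGram_of_entries (x := ↑u⁻¹) (y := ↑u⁻¹ * t) (z := 0) (w := u)
  · simp
  · ring
  · linear_combination b * hu
  · linear_combination b * t * hu - ht

lemma isCongruent_latticeGram_of_dvd_mul_sub_sq (u : Rˣ) (h : b ∣ c * d - u ^ 2) :
    IsCongruent (latticeGram b c) (latticeGram b d) := by
  obtain ⟨t, ht⟩ := h
  have hu : (↑u⁻¹ : R) * u = 1 := u.inv_mul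
  have hinv : (↑u⁻¹ : R) ^ 2 * (c * d - b * t) = 1 := by
    linear_combination (↑u⁻¹ : R) ^ 2 * ht + (↑u⁻¹ * u + 1) * hu
  have hnorm : b * -(↑u⁻¹ * t) + c * (↑u⁻¹ * d) = u := by
    linear_combination (↑u⁻¹ : R) * ht + u * hu
  -- The first column `u⁻¹ (-c, b)` spans the second isotropic line.
  apply isCongruent_latticeGram_of_entries
    (x := -(↑u⁻¹ * c)) (y := -(↑u⁻¹ * t)) (z := ↑u⁻¹ * b) (w := ↑u⁻¹ * d)
  · have hdet : -(↑u⁻¹ * c) * (↑u⁻¹ * d) - -(↑u⁻¹ * t) * (↑u⁻¹ * b) = (-1 : R) := by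
      linear_combination -hinv
    exact hdet ▸ isUnit_one.neg
  · ring
  · linear_combination b * hinv
  · rw [hnorm]
    linear_combination d * hu

lemma exists_unit_dvd_sub_sq_mul (hw : IsUnit w) (hd : w * (b * y + c * w) = d) :
    ∃ u : Rˣ, b ∣ d - u ^ 2 * c := by
  obtain ⟨u, rfl⟩ := hw
  exact ⟨u, u * y, by linear_combination -hd⟩

lemma exists_eq_neg_mul_and_eq_mul_of_isCoprime (hbc : IsCoprime b c) (h : b * x + c * z = 0) :
    ∃ k, x = -(c * k) ∧ z = b * k := by
  obtain ⟨p, q, hpq⟩ := hbc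
  exact ⟨p * z - q * x, by linear_combination p * h - x * hpq,
    by linear_combination q * h - z * hpq⟩

lemma exists_unit_dvd_mul_sub_sq (hbc : IsCoprime b c) (hx : b * x + c * z = 0)
    (hdet : IsUnit (x * w - y * z)) (hd : w * (b * y + c * w) = d) :
    ∃ u : Rˣ, b ∣ c * d - u ^ 2 := by
  obtain ⟨k, rfl, rfl⟩ := exists_eq_neg_mul_and_eq_mul_of_isCoprime hbc hx
  obtain ⟨u, hu⟩ : IsUnit (b * y + c * w) := isUnit_of_dvd_unit ⟨-k, by ring⟩ hdet
  rw [← hu] at hd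
  exact ⟨u, -(y * u), by linear_combination -c * hd - u * hu⟩

theorem stmt3_general [NoZeroDivisors R] [NeZero (2 : R)] (hbc : IsCoprime b c) :
    IsCongruent (latticeGram b c) (latticeGram b d) ↔
      ∃ u : Rˣ, b ∣ d - u ^ 2 * c ∨ b ∣ c * d - u ^ 2 := by
  constructor
  · intro h
    obtain ⟨x, y, z, w, hdet, hisotropic, hd⟩ := exists_entries_of_isCongruent_latticeGram h
    rw [exists_or]
    rcases mul_eq_zero.mp hisotropic with rfl | hx
    · exact .inl (exists_unit_dvd_sub_sq_mul (isUnit_of_mul_isUnit_right (by simpa using hdet)) hd)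
    · exact .inr (exists_unit_dvd_mul_sub_sq hbc hx hdet hd)
  · rintro ⟨u, h | h⟩
    · exact isCongruent_latticeGram_of_dvd_sub_sq_mul u h
    · exact isCongruent_latticeGram_of_dvd_mul_sub_sq u h

end CommRing

lemma isCongruent_latticeGram_int_iff {b c d : ℤ} (hbc : IsCoprime b c) :
    IsCongruent (latticeGram b c) (latticeGram b d) ↔ c ≡ d [ZMOD b] ∨ c * d ≡ 1 [ZMOD b] := by
  rw [Int.modEq_comm (a := c * d), Int.modEq_iff_dvd, Int.modEq_iff_dvd]
  simp [stmt3_general hbc, Int.isUnit_sq]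

/-- For b > 0, gcd(b,c)=1 and 0 ≤ c < d ≤ b-1, the lattices Λ_{b,c} and Λ_{b,d}
are isomorphic if and only if cd ≡ 1 (mod b). -/
theorem stmt3 (b c d : ℤ) (hb : 0 < b) (hgcd : Int.gcd b c = 1)
    (hc0 : 0 ≤ c) (hcd : c < d) (hdb : d ≤ b - 1) :
    (∃ A : Matrix (Fin 2) (Fin 2) ℤ, IsUnit A.det ∧
      Aᵀ * !![0, b; b, 2*c] * A = !![0, b; b, 2*d]) ↔ c * d ≡ 1 [ZMOD b] := by
  have hne : ¬ c ≡ d [ZMOD b] := fun h ↦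
    hcd.ne (by rwa [Int.ModEq, Int.emod_eq_of_lt, Int.emod_eq_of_lt] at h <;> lia)
  exact (isCongruent_latticeGram_int_iff (Int.isCoprime_iff_gcd_eq_one.mpr hgcd)).trans
    (or_iff_right hne)
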